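/- arXiv:hep-th/0602165 — 2 statements merged into one kernel-verified Lean document; each statement's English description precedes it below -/
import Mathlib

section
/- At the singular point (−32/675, 9/20) the discriminant Δ₀ has a cusp: the Hessian matrix H of second-order partial derivatives of Δ₀ at (−32/675, 9/20) is nonzero but has determinant 0, the vector v = (32, −405) spans its kernel (H·v = 0), and the third directional derivative of Δ₀ along v at (−32/675, 9/20) is nonzero. -/
/-- The primary discriminant of the moduli space of complexified Kähler forms of the
`ℂ³/ℤ₅` model. -/
noncomputable def Δ₀ (x₁ x₂ : ℂ) : ℂ :=
  3125 * x₁ ^ 2 * x₂ ^ 3 + 500 * x₁ * x₂ ^ 2 - 225 * x₁ * x₂ + 16 * x₂ ^ 2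
    + 27 * x₁ - 8 * x₂ + 1

/-- The Hessian matrix of `Δ₀` at the singular point `(−32/675, 9/20)`. -/
noncomputable def hessianAtCusp : Matrix (Fin 2) (Fin 2) ℂ :=
  !![deriv (fun x₁ : ℂ => deriv (fun t : ℂ => Δ₀ t (9/20)) x₁) (-32/675),
     deriv (fun x₂ : ℂ => deriv (fun t : ℂ => Δ₀ t x₂) (-32/675)) (9/20);
     deriv (fun x₂ : ℂ => deriv (fun t : ℂ => Δ₀ t x₂) (-32/675)) (9/20),
     deriv (fun x₂ : ℂ => deriv (fun t : ℂ => Δ₀ (-32/675) t) x₂) (9/20)]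

/-!
The Hessian of `Δ₀` at `(−32/675, 9/20)` is the rank-one form `(1/288) n nᵀ` with `n = (405, 32)`:
its determinant vanishes and its kernel is the line orthogonal to `n`, spanned by `(32, −405)`.
Along this line `Δ₀` is a polynomial in the parameter divisible by `t³` but not by `t⁴`.
-/

theorem iteratedDeriv_sub_pow_mul {𝕜 : Type*} [NontriviallyNormedField 𝕜] {n : ℕ} {g : 𝕜 → 𝕜}
    {a : 𝕜} (hg : ContDiffAt 𝕜 n g a) :
    iteratedDeriv n (fun t => (t - a) ^ n * g t) a = n.factorial * g a := by
  have iteratedDeriv_sub_pow (i : ℕ) :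
      iteratedDeriv i (fun t => (t - a) ^ n) a = if i = n then (n.factorial : 𝕜) else 0 := by
    rw [iteratedDeriv_comp_sub_const i (fun t => t ^ n) a]
    simp only [sub_self, iteratedDeriv_fun_pow_zero, Nat.cast_ite, Nat.cast_zero]
  rw [iteratedDeriv_fun_mul (by fun_prop) hg, Finset.sum_eq_single_of_mem n (by simp)]
  · simp [iteratedDeriv_sub_pow]
  · intro i _ hi
    simp [iteratedDeriv_sub_pow, hi]

theorem deriv_Δ₀_fst (x y : ℂ) :
    deriv (fun t => Δ₀ t y) x = 6250 * x * y ^ 3 + 500 * y ^ 2 - 225 * y + 27 := by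
  simp (disch := fun_prop) only [Δ₀, deriv_fun_add, deriv_fun_sub, deriv_mul_const_field,
    deriv_const_mul_field, deriv_fun_pow, deriv_const, deriv_id'', deriv_const_mul_id']
  ring

theorem deriv_Δ₀_snd (x y : ℂ) :
    deriv (fun t => Δ₀ x t) y =
      9375 * x ^ 2 * y ^ 2 + 1000 * x * y - 225 * x + 32 * y - 8 := by
  simp (disch := fun_prop) only [Δ₀, deriv_fun_add, deriv_fun_sub, deriv_mul_const_field,
    deriv_const_mul_field, deriv_fun_pow, deriv_const, deriv_id'', deriv_const_mul_id']
  ring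

theorem deriv_fst_deriv_Δ₀_fst (x y : ℂ) :
    deriv (fun s => deriv (fun t => Δ₀ t y) s) x = 6250 * y ^ 3 := by
  simp (disch := fun_prop) only [deriv_Δ₀_fst, deriv_fun_add, deriv_fun_sub, deriv_mul_const_field,
    deriv_const, deriv_const_mul_id']
  ring

theorem deriv_snd_deriv_Δ₀_fst (x y : ℂ) :
    deriv (fun s => deriv (fun t => Δ₀ t s) x) y = 18750 * x * y ^ 2 + 1000 * y - 225 := by
  simp (disch := fun_prop) only [deriv_Δ₀_fst, deriv_fun_add, deriv_fun_sub, deriv_const_mul_field,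
    deriv_fun_pow, deriv_const, deriv_id'', deriv_const_mul_id']
  ring

theorem deriv_snd_deriv_Δ₀_snd (x y : ℂ) :
    deriv (fun s => deriv (fun t => Δ₀ x t) s) y = 18750 * x ^ 2 * y + 1000 * x + 32 := by
  simp (disch := fun_prop) only [deriv_Δ₀_snd, deriv_fun_add, deriv_fun_sub, deriv_mul_const_field,
    deriv_const_mul_field, deriv_fun_pow, deriv_const, deriv_id'', deriv_const_mul_id']
  ring

theorem hessianAtCusp_eq_smul_vecMulVec :
    hessianAtCusp = (1 / 288 : ℂ) • Matrix.vecMulVec ![405, 32] ![405, 32] := by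
  rw [hessianAtCusp, deriv_fst_deriv_Δ₀_fst, deriv_snd_deriv_Δ₀_fst, deriv_snd_deriv_Δ₀_snd]
  ext i j
  fin_cases i <;> fin_cases j <;> norm_num [Matrix.vecMulVec_apply]

theorem Δ₀_along_kernel (t : ℂ) :
    Δ₀ (-32/675 + t * 32) (9/20 + t * (-405)) =
      t ^ 3 * (-900 ^ 3 * (291600 * t ^ 2 - 1836 * t + 1)) := by
  rw [Δ₀]
  ring

theorem iteratedDeriv_three_Δ₀_along_kernel :
    iteratedDeriv 3 (fun t : ℂ => Δ₀ (-32/675 + t * 32) (9/20 + t * (-405))) 0 =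
      -6 * 900 ^ 3 := by
  have leading_term := iteratedDeriv_sub_pow_mul (n := 3) (a := (0 : ℂ))
    (g := fun t => -900 ^ 3 * (291600 * t ^ 2 - 1836 * t + 1)) (by fun_prop)
  simp only [sub_zero, ← Δ₀_along_kernel] at leading_term
  rw [leading_term]
  norm_num [Nat.factorial]

/-- At `(−32/675, 9/20)` the discriminant `Δ₀` has a cusp: the Hessian is nonzero with
vanishing determinant, its kernel is spanned by `v = (32, −405)`, and the third
directional derivative of `Δ₀` along `v` at the point is nonzero. -/
theorem cusp_at_singular_point :
    hessianAtCusp ≠ 0 ∧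
    hessianAtCusp.det = 0 ∧
    hessianAtCusp.mulVec ![32, -405] = 0 ∧
    iteratedDeriv 3 (fun t : ℂ => Δ₀ (-32/675 + t * 32) (9/20 + t * (-405))) 0 ≠ 0 := by
  rw [hessianAtCusp_eq_smul_vecMulVec]
  refine ⟨?nonzero, ?det, ?kernel, ?third⟩
  case nonzero =>
    exact smul_ne_zero (by norm_num) (Matrix.vecMulVec_ne_zero (by simp) (by simp))
  case det => rw [Matrix.det_smul, Matrix.det_vecMulVec, mul_zero]
  case kernel =>
    have orthogonal : ![405, 32] ⬝ᵥ ![32, -405] = (0 : ℂ) := by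
      norm_num [Matrix.vec2_dotProduct]
    rw [Matrix.smul_mulVec, Matrix.vecMulVec_mulVec, orthogonal, MulOpposite.op_zero, zero_smul,
      smul_zero]
  case third =>
    rw [iteratedDeriv_three_Δ₀_along_kernel]
    norm_num
end

section
/- Let n ≥ 2 and let a : Fin n → ℕ satisfy aᵢ ≥ 1 for all i, and set m = Σᵢ aᵢ and a_I = Σ_{i∈I} aᵢ for I ⊆ Fin n. Then Σ_{I ⊆ Fin n} (−1)^{#I} · ( Σ_{l = 0}^{m−1} (if a_I ≤ l then l − a_I else 0) ) = −a₀ · Σ_{I ⊆ Fin n, 0 ∉ I} (−1)^{#I} · a_I, where a₀ = a(0); in particular this quantity equals a₀·a₁ when n = 2 and equals 0 whenever n ≥ 3. -/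
open Finset

/-!
Summing over `l` turns the inner sum into `(m - a_I).choose 2`, a quadratic polynomial in `a_I` on
the range `a_I ≤ m`. An alternating sum over subsets is an iterated finite difference, one
difference per index. The difference in the direction `j` leaves `-a_j a_I` plus a constant, and the
constant is killed by any further difference. A second difference in a direction `k` turns `-a_I`
into `a_k`, and a third one kills everything.
-/

section AlternatingSum

variable {ι M : Type*} [AddCommGroup M]

theorem sum_powerset_neg_one_pow_card_smul_const {s : Finset ι} (hs : s.Nonempty) (c : M) :
    ∑ I ∈ s.powerset, (-1 : ℤ) ^ #I • c = 0 := by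
  rw [← sum_smul, sum_powerset_neg_one_pow_card_of_nonempty hs, zero_smul]

theorem sum_powerset_insert_neg_one_pow_card_smul [DecidableEq ι] {s : Finset ι} {j : ι}
    (hj : j ∉ s) (F : Finset ι → M) :
    ∑ I ∈ (insert j s).powerset, (-1 : ℤ) ^ #I • F I =
      ∑ I ∈ s.powerset, (-1 : ℤ) ^ #I • (F I - F (insert j I)) := by
  rw [sum_powerset_insert hj, ← sum_add_distrib]
  refine sum_congr rfl fun I hI => ?_
  have hjI : j ∉ I := notMem_mono (mem_powerset.1 hI) hj
  rw [card_insert_of_notMem hjI, pow_succ, mul_neg_one, neg_smul, smul_sub, sub_eq_add_neg]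

theorem sum_powerset_neg_one_pow_card_smul_sum {s : Finset ι} (hs : s.Nontrivial) (f : ι → M) :
    ∑ I ∈ s.powerset, (-1 : ℤ) ^ #I • ∑ i ∈ I, f i = 0 := by
  classical
  obtain ⟨k, hk⟩ := hs.nonempty
  have hdiff : ∀ I ∈ (s.erase k).powerset, ∑ i ∈ I, f i - ∑ i ∈ insert k I, f i = -f k := by
    intro I hI
    rw [sum_insert (notMem_mono (mem_powerset.1 hI) (notMem_erase k s)), sub_add_cancel_right]
  rw [← insert_erase hk, sum_powerset_insert_neg_one_pow_card_smul (notMem_erase k s),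
    sum_congr rfl fun I hI => by rw [hdiff I hI],
    sum_powerset_neg_one_pow_card_smul_const ((erase_nonempty hk).2 hs)]

end AlternatingSum

theorem sum_range_ite_sub_eq_choose_two (m s : ℕ) :
    ∑ l ∈ range m, (if s ≤ l then (l : ℤ) - s else 0) = ((m - s).choose 2 : ℕ) := by
  induction m with
  | zero => simp
  | succ m ih =>
    rw [sum_range_succ, ih]
    split_ifs with h
    · rw [Nat.succ_sub h, Nat.choose_succ_succ', Nat.choose_one_right, Nat.cast_add,
        Nat.cast_sub h, add_comm]
    · rw [Nat.sub_eq_zero_of_le (by lia : m ≤ s), Nat.sub_eq_zero_of_le (by lia : m + 1 ≤ s),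
        add_zero]

theorem add_choose_two (p q : ℕ) : (p + q).choose 2 = p.choose 2 + p * q + q.choose 2 := by
  induction q with
  | zero => simp
  | succ q ih =>
    rw [← add_assoc, Nat.choose_succ_succ', Nat.choose_succ_succ' q, Nat.choose_one_right,
      Nat.choose_one_right, ih]
    ring

theorem choose_two_sub_sub_choose_two_sub_add {m b c : ℕ} (h : b + c ≤ m) :
    ((m - c).choose 2 : ℤ) - ((m - (b + c)).choose 2 : ℕ) =
      b * (m - b) + b.choose 2 - b * c := by
  obtain ⟨p, rfl⟩ := Nat.exists_eq_add_of_le h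
  rw [show b + c + p - c = p + b by lia, Nat.add_sub_cancel_left, add_choose_two]
  push_cast
  ring

theorem sum_powerset_insert_neg_one_pow_card_mul_choose_two {ι : Type*} [DecidableEq ι]
    {s : Finset ι} {j : ι} (hj : j ∉ s) (hs : s.Nonempty) {a : ι → ℕ} {m : ℕ}
    (hm : ∑ i ∈ insert j s, a i ≤ m) :
    ∑ I ∈ (insert j s).powerset, (-1 : ℤ) ^ #I * ((m - ∑ i ∈ I, a i).choose 2 : ℕ) =
      -(a j : ℤ) * ∑ I ∈ s.powerset, (-1 : ℤ) ^ #I * (∑ i ∈ I, a i : ℕ) := by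
  obtain ⟨c, hdiff⟩ : ∃ c : ℤ, ∀ I ∈ s.powerset,
      ((m - ∑ i ∈ I, a i).choose 2 : ℤ) - ((m - ∑ i ∈ insert j I, a i).choose 2 : ℕ) =
        c - a j * (∑ i ∈ I, a i : ℕ) := by
    refine ⟨a j * (m - a j) + (a j).choose 2, fun I hI => ?_⟩
    have hIs : I ⊆ s := mem_powerset.1 hI
    have hle : ∑ i ∈ insert j I, a i ≤ m :=
      (sum_le_sum_of_subset (insert_subset_insert j hIs)).trans hm
    rw [sum_insert (notMem_mono hIs hj)] at hle ⊢
    exact choose_two_sub_sub_choose_two_sub_add hle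
  simp only [← smul_eq_mul (a := (-1 : ℤ) ^ _)]
  rw [sum_powerset_insert_neg_one_pow_card_smul hj,
    sum_congr rfl fun I hI => by rw [hdiff I hI]]
  simp only [smul_sub, sum_sub_distrib]
  rw [sum_powerset_neg_one_pow_card_smul_const hs, zero_sub, neg_mul, mul_sum]
  simp only [mul_smul_comm]

section ChernCoeff

variable {ι : Type*} [Fintype ι]

/-- The first Chern coefficient of the class `Σ_{l < m} [𝓜₍₋ₗ₎]` for the weights `a`, with
`m` a free parameter rather than `Σᵢ aᵢ`. Subtraction is in `ℤ`, so the terms with `l < a_I` are cut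
off by the conditional and not by truncation. -/
def chernCoeff (a : ι → ℕ) (m : ℕ) : ℤ :=
  ∑ I : Finset ι, (-1 : ℤ) ^ #I *
    ∑ l ∈ range m, (if ∑ i ∈ I, a i ≤ l then (l : ℤ) - (∑ i ∈ I, a i : ℕ) else 0)

variable [DecidableEq ι]

theorem chernCoeff_eq_neg_mul_sum_powerset_erase [Nontrivial ι] {a : ι → ℕ} {m : ℕ}
    (hm : ∑ i, a i ≤ m) (j : ι) :
    chernCoeff a m =
      -(a j : ℤ) * ∑ I ∈ (univ.erase j).powerset, (-1 : ℤ) ^ #I * (∑ i ∈ I, a i : ℕ) := by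
  have hinsert : insert j (univ.erase j) = univ := insert_erase (mem_univ j)
  have hne : (univ.erase j).Nonempty := (erase_nonempty (mem_univ j)).2 univ_nontrivial
  rw [← sum_powerset_insert_neg_one_pow_card_mul_choose_two (notMem_erase j univ) hne
    (hinsert ▸ hm), hinsert, powerset_univ]
  simp only [chernCoeff, sum_range_ite_sub_eq_choose_two]

theorem koszul_cancellation_evaluated_general {a : ι → ℕ} {m : ℕ} (hm : ∑ i, a i ≤ m)
    {j k : ι} (hjk : j ≠ k) :
    chernCoeff a m =
        -(a j : ℤ) * ∑ I : Finset ι with j ∉ I, (-1 : ℤ) ^ #I * (∑ i ∈ I, a i : ℕ) ∧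
      (Fintype.card ι = 2 → chernCoeff a m = (a j : ℤ) * a k) ∧
      (3 ≤ Fintype.card ι → chernCoeff a m = 0) := by
  have : Nontrivial ι := nontrivial_of_ne j k hjk
  have hfilter : ({I | j ∉ I} : Finset (Finset ι)) = (univ.erase j).powerset := by
    ext I
    simp [subset_erase]
  have hcard : #(univ.erase j) = Fintype.card ι - 1 := card_erase_of_mem (mem_univ j)
  rw [hfilter, chernCoeff_eq_neg_mul_sum_powerset_erase hm j]
  refine ⟨rfl, fun h2 => ?_, fun h3 => ?_⟩
  · have herase : univ.erase j = {k} :=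
      (eq_of_subset_of_card_le (by simpa using hjk.symm) (by simp [hcard, h2])).symm
    rw [herase, ← insert_empty_eq k, sum_powerset_insert (notMem_empty k)]
    simp
  · have hnontrivial : (univ.erase j).Nontrivial := one_lt_card_iff_nontrivial.1 (by lia)
    have hsum := sum_powerset_neg_one_pow_card_smul_sum hnontrivial fun i => (a i : ℤ)
    simp only [smul_eq_mul, ← Nat.cast_sum] at hsum
    rw [hsum, mul_zero]

end ChernCoeff

/-- Evaluated form of the combinatorial cancellation in the K-theory lemma:
with `m = Σ aᵢ` and `n ≥ 2`, the first Chern coefficient of `Σₗ [𝓜₍₋ₗ₎]` equals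
`−a₀ · Σ_{I, 0∉I} (−1)^{#I} a_I`; it equals `a₀·a₁` when `n = 2` and `0` when
`n ≥ 3`. -/
theorem koszul_cancellation_evaluated {n : ℕ} (hn : 2 ≤ n) (a : Fin n → ℕ)
    (ha : ∀ i, 1 ≤ a i) (m : ℕ) (hm : m = ∑ i, a i) :
    ((∑ I : Finset (Fin n), (-1 : ℤ) ^ I.card *
        ∑ l ∈ Finset.range m,
          (if (∑ i ∈ I, a i) ≤ l then (l : ℤ) - (∑ i ∈ I, a i : ℕ) else 0)) =
      -(a ⟨0, by omega⟩ : ℤ) *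
        ∑ I ∈ Finset.univ.filter (fun I : Finset (Fin n) => (⟨0, by omega⟩ : Fin n) ∉ I),
          (-1 : ℤ) ^ I.card * (∑ i ∈ I, a i : ℕ)) ∧
    (n = 2 →
      (∑ I : Finset (Fin n), (-1 : ℤ) ^ I.card *
          ∑ l ∈ Finset.range m,
            (if (∑ i ∈ I, a i) ≤ l then (l : ℤ) - (∑ i ∈ I, a i : ℕ) else 0)) =
        (a ⟨0, by omega⟩ : ℤ) * (a ⟨1, by omega⟩ : ℤ)) ∧
    (3 ≤ n →
      (∑ I : Finset (Fin n), (-1 : ℤ) ^ I.card *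
          ∑ l ∈ Finset.range m,
            (if (∑ i ∈ I, a i) ≤ l then (l : ℤ) - (∑ i ∈ I, a i : ℕ) else 0)) = 0) := by
  simpa only [chernCoeff, Fintype.card_fin] using
    koszul_cancellation_evaluated_general hm.ge (j := ⟨0, by lia⟩) (k := ⟨1, by lia⟩) (by simp)
end
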